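/- arXiv:2003.02681 — 8 statements merged into one kernel-verified Lean document; each statement's English description precedes it below -/
import Mathlib

section
/- Let β* := N Xᵀ V⁻¹ x. Then (i) X β* = x; (ii) the i-th entry of β* is 0 whenever N_ii = 0; and (iii) for every β ∈ ℝ^m with X β = x and with β_i = 0 whenever N_ii = 0, one has β*ᵀ N⁺ β* ≤ βᵀ N⁺ β, with equality if and only if β = β*. (Optimality of the LinUCB-d coefficient vector, Proposition 1.) -/
open Matrix

/-- Optimality of the LinUCB-d coefficient vector (Proposition 1).
`X` is a real `d × m` matrix, `N` a diagonal matrix (given by its diagonal entries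
`N : Fin m → ℝ`, all nonnegative) such that `V := X N Xᵀ` is positive definite, and
`N⁺` is the diagonal pseudo-inverse of `N`.  With `β* := N Xᵀ V⁻¹ x`:
(i) `X β* = x`; (ii) `β*ᵢ = 0` whenever `Nᵢᵢ = 0`; (iii) `β*` minimizes `βᵀ N⁺ β`
over all `β` with `X β = x` and `βᵢ = 0` whenever `Nᵢᵢ = 0`, with equality iff `β = β*`. -/
theorem stmt_0 (d m : ℕ) (X : Matrix (Fin d) (Fin m) ℝ) (N : Fin m → ℝ)
    (hN : ∀ i, 0 ≤ N i)
    (hV : (X * Matrix.diagonal N * Xᵀ).PosDef) (x : Fin d → ℝ) :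
    let V : Matrix (Fin d) (Fin d) ℝ := X * Matrix.diagonal N * Xᵀ
    let Npinv : Matrix (Fin m) (Fin m) ℝ :=
      Matrix.diagonal (fun i => if 0 < N i then (N i)⁻¹ else 0)
    let βstar : Fin m → ℝ := (Matrix.diagonal N * Xᵀ * V⁻¹) *ᵥ x
    (X *ᵥ βstar = x) ∧
    (∀ i, N i = 0 → βstar i = 0) ∧
    (∀ β : Fin m → ℝ, X *ᵥ β = x → (∀ i, N i = 0 → β i = 0) →
      βstar ⬝ᵥ (Npinv *ᵥ βstar) ≤ β ⬝ᵥ (Npinv *ᵥ β) ∧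
      (βstar ⬝ᵥ (Npinv *ᵥ βstar) = β ⬝ᵥ (Npinv *ᵥ β) ↔ β = βstar)) := by
  intro V Npinv βstar
  have hdet : IsUnit V.det := isUnit_iff_ne_zero.mpr (ne_of_gt hV.det_pos)
  obtain ⟨u, hu⟩ : ∃ u : Fin d → ℝ, u = V⁻¹ *ᵥ x := ⟨_, rfl⟩
  have hb : ∀ i, βstar i = N i * (Xᵀ *ᵥ u) i := by
    intro i
    have h : βstar = Matrix.diagonal N *ᵥ (Xᵀ *ᵥ u) := by
      simp only [βstar, hu, Matrix.mulVec_mulVec, Matrix.mul_assoc]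
    rw [h, Matrix.mulVec_diagonal]
  have h1 : X *ᵥ βstar = x := by
    have h : X *ᵥ βstar = (V * V⁻¹) *ᵥ x := by
      simp only [βstar, Matrix.mulVec_mulVec]
      simp only [V, Matrix.mul_assoc]
    rw [h, Matrix.mul_nonsing_inv _ hdet, Matrix.one_mulVec]
  have h2 : ∀ i, N i = 0 → βstar i = 0 := fun i hi => by rw [hb, hi, zero_mul]
  refine ⟨h1, h2, ?_⟩
  intro β hβ hβ0
  have horth : ∑ i, (Xᵀ *ᵥ u) i * (β i - βstar i) = 0 := by
    have h : (Xᵀ *ᵥ u) ⬝ᵥ (β - βstar) = 0 := by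
      rw [Matrix.mulVec_transpose, ← Matrix.dotProduct_mulVec, Matrix.mulVec_sub, hβ, h1,
        sub_self, dotProduct_zero]
    simpa [dotProduct] using h
  have hq : ∀ γ : Fin m → ℝ, γ ⬝ᵥ (Npinv *ᵥ γ) =
      ∑ i, γ i * ((if 0 < N i then (N i)⁻¹ else 0) * γ i) := by
    intro γ
    simp only [dotProduct, Npinv, Matrix.mulVec_diagonal]
  have key : β ⬝ᵥ (Npinv *ᵥ β) = βstar ⬝ᵥ (Npinv *ᵥ βstar) +
      ∑ i, (if 0 < N i then (N i)⁻¹ else 0) * (β i - βstar i) ^ 2 := by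
    have h : β ⬝ᵥ (Npinv *ᵥ β) = βstar ⬝ᵥ (Npinv *ᵥ βstar) +
      ∑ i, (if 0 < N i then (N i)⁻¹ else 0) * (β i - βstar i) ^ 2
      + 2 * ∑ i, (Xᵀ *ᵥ u) i * (β i - βstar i) := by
      rw [hq, hq, Finset.mul_sum, ← Finset.sum_add_distrib, ← Finset.sum_add_distrib]
      refine Finset.sum_congr rfl fun i _ => ?_
      rcases (hN i).eq_or_lt with h0 | h0
      · rw [h2 i h0.symm, hβ0 i h0.symm]; simp
      · rw [if_pos h0, hb i]
        field_simp
        ring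
    rw [h, horth]; ring
  have hnn : ∀ i ∈ Finset.univ,
      0 ≤ (if 0 < N i then (N i)⁻¹ else 0) * (β i - βstar i) ^ 2 := by
    intro i _
    refine mul_nonneg ?_ (sq_nonneg _)
    split_ifs with h
    · exact (inv_pos.mpr h).le
    · exact le_rfl
  refine ⟨by rw [key]; linarith [Finset.sum_nonneg hnn], ?_, fun h => by rw [h]⟩
  intro he
  have hs : ∑ i, (if 0 < N i then (N i)⁻¹ else 0) * (β i - βstar i) ^ 2 = 0 := by linarith
  rw [Finset.sum_eq_zero_iff_of_nonneg hnn] at hs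
  funext i
  rcases (hN i).eq_or_lt with h0 | h0
  · rw [h2 i h0.symm, hβ0 i h0.symm]
  · have h := hs i (Finset.mem_univ i)
    rw [if_pos h0] at h
    rcases mul_eq_zero.mp h with h | h
    · exact absurd h (inv_pos.mpr h0).ne'
    · exact sub_eq_zero.mp (pow_eq_zero_iff two_ne_zero |>.mp h)
end

section
/- Let β* := N Xᵀ V⁻¹ x. Then β*ᵀ N⁺ β* = xᵀ V⁻¹ x; that is, the estimation-uncertainty quantity σ̂² computed by LinUCB-d equals the LinUCB quantity ‖x‖²_{V⁻¹}. -/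
open Matrix

/-- The LinUCB-d uncertainty `σ̂² = β*ᵀ N⁺ β*` equals the LinUCB quantity `‖x‖²_{V⁻¹}`,
where `β* := N Xᵀ V⁻¹ x`, `V := X N Xᵀ` is positive definite and `N⁺` is the diagonal
pseudo-inverse of the nonnegative diagonal matrix `N`. -/
theorem stmt_1 (d m : ℕ) (X : Matrix (Fin d) (Fin m) ℝ) (N : Fin m → ℝ)
    (hN : ∀ i, 0 ≤ N i)
    (hV : (X * Matrix.diagonal N * Xᵀ).PosDef) (x : Fin d → ℝ) :
    let V : Matrix (Fin d) (Fin d) ℝ := X * Matrix.diagonal N * Xᵀ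
    let Npinv : Matrix (Fin m) (Fin m) ℝ :=
      Matrix.diagonal (fun i => if 0 < N i then (N i)⁻¹ else 0)
    let βstar : Fin m → ℝ := (Matrix.diagonal N * Xᵀ * V⁻¹) *ᵥ x
    βstar ⬝ᵥ (Npinv *ᵥ βstar) = x ⬝ᵥ (V⁻¹ *ᵥ x) := by
  intro V Npinv βstar
  have hdet : IsUnit V.det := (Matrix.isUnit_iff_isUnit_det V).1 hV.isUnit
  have hy : V *ᵥ (V⁻¹ *ᵥ x) = x := by
    rw [Matrix.mulVec_mulVec, Matrix.mul_nonsing_inv V hdet, Matrix.one_mulVec]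
  have hβ : βstar = Matrix.diagonal N *ᵥ (Xᵀ *ᵥ (V⁻¹ *ᵥ x)) := by
    simp only [βstar, Matrix.mulVec_mulVec, Matrix.mul_assoc]
  generalize V⁻¹ *ᵥ x = y at hy hβ ⊢
  have h1 : βstar ⬝ᵥ (Npinv *ᵥ βstar) = (Xᵀ *ᵥ y) ⬝ᵥ (Matrix.diagonal N *ᵥ (Xᵀ *ᵥ y)) := by
    rw [hβ]
    simp only [dotProduct, Npinv, Matrix.mulVec_diagonal]
    refine Finset.sum_congr rfl fun i _ => ?_
    rcases (hN i).eq_or_lt with h | h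
    · simp [← h]
    · have := h.ne'
      rw [if_pos h]
      field_simp
  rw [h1, Matrix.mulVec_transpose, ← Matrix.dotProduct_mulVec, ← Matrix.mulVec_transpose,
    Matrix.mulVec_mulVec, Matrix.mulVec_mulVec]
  change y ⬝ᵥ (V *ᵥ y) = _
  rw [hy, dotProduct_comm]
end

section
/- Let β* := N Xᵀ V⁻¹ x, and let s ∈ ℝ^m satisfy s_i = 0 whenever N_ii = 0. Then sᵀ N⁺ β* = (X s)ᵀ V⁻¹ x; that is, the LinUCB-d reward estimate r̂ = sᵀ N⁺ β* equals θ̂ᵀ x with θ̂ := V⁻¹ X s, the LinUCB (ridge-regression) estimate. -/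
open Matrix

/-- The LinUCB-d reward estimate `r̂ = sᵀ N⁺ β*` (with `β* := N Xᵀ V⁻¹ x`) equals
`θ̂ᵀ x` with `θ̂ := V⁻¹ X s`, the LinUCB ridge-regression estimate, whenever
`sᵢ = 0` for every `i` with `Nᵢᵢ = 0`.  Here `V := X N Xᵀ` is positive definite and
`N⁺` is the diagonal pseudo-inverse of the nonnegative diagonal matrix `N`. -/
theorem stmt_2 (d m : ℕ) (X : Matrix (Fin d) (Fin m) ℝ) (N : Fin m → ℝ)
    (hN : ∀ i, 0 ≤ N i)
    (hV : (X * Matrix.diagonal N * Xᵀ).PosDef) (x : Fin d → ℝ)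
    (s : Fin m → ℝ) (hs : ∀ i, N i = 0 → s i = 0) :
    let V : Matrix (Fin d) (Fin d) ℝ := X * Matrix.diagonal N * Xᵀ
    let Npinv : Matrix (Fin m) (Fin m) ℝ :=
      Matrix.diagonal (fun i => if 0 < N i then (N i)⁻¹ else 0)
    let βstar : Fin m → ℝ := (Matrix.diagonal N * Xᵀ * V⁻¹) *ᵥ x
    s ⬝ᵥ (Npinv *ᵥ βstar) = (X *ᵥ s) ⬝ᵥ (V⁻¹ *ᵥ x) := by
  intro V Npinv βstar
  have h1 : βstar = Matrix.diagonal N *ᵥ (Xᵀ *ᵥ (V⁻¹ *ᵥ x)) := by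
    simp only [βstar, Matrix.mulVec_mulVec, Matrix.mul_assoc]
  have h2 : (X *ᵥ s) ⬝ᵥ (V⁻¹ *ᵥ x) = s ⬝ᵥ (Xᵀ *ᵥ (V⁻¹ *ᵥ x)) := by
    rw [Matrix.dotProduct_mulVec s, Matrix.vecMul_transpose]
  rw [h1, h2]
  generalize Xᵀ *ᵥ (V⁻¹ *ᵥ x) = w
  unfold dotProduct
  refine Finset.sum_congr rfl fun i _ => ?_
  simp only [Npinv, Matrix.mulVec_diagonal]
  rcases (hN i).eq_or_lt with h | h
  · simp [hs i h.symm]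
  · rw [if_pos h, inv_mul_cancel_left₀ h.ne']
end

section
/- Let V₀ be a positive definite d×d real matrix and let x₁, …, x_n ∈ ℝ^d satisfy ‖x_t‖₂ ≤ l for all t, where l > 0. Define V_t := V_{t−1} + x_t x_tᵀ for t = 1, …, n. Then Σ_{t=1}^n min(1, x_tᵀ V_{t−1}⁻¹ x_t) ≤ 2 log(det V_n / det V₀) ≤ 2 d log( (trace V₀ + n l²) / (d · (det V₀)^{1/d}) ). (Elliptical potential lemma.) -/
open Matrix Finset Real

lemma det_step {d : ℕ} (A : Matrix (Fin d) (Fin d) ℝ) (hA : A.PosDef) (x : Fin d → ℝ) :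
    (A + vecMulVec x x).det = A.det * (1 + x ⬝ᵥ (A⁻¹ *ᵥ x)) := by
  have h : IsUnit A.det := hA.det_pos.ne'.isUnit
  have e : vecMulVec x x = replicateCol (Fin 1) x * replicateRow (Fin 1) x := by
    ext i j
    simp [Matrix.mul_apply, vecMulVec_apply]
  rw [e, det_add_mul _ _ h, Matrix.mul_assoc, det_fin_one]
  congr 1

lemma min_le_log (u : ℝ) (hu : 0 ≤ u) : min 1 u ≤ 2 * Real.log (1 + u) := by
  have h := Real.one_sub_inv_le_log_of_pos (show 0 < 1 + u by linarith)
  have h2 : (1 : ℝ) - (1 + u)⁻¹ = u / (1 + u) := by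
    field_simp; ring
  rw [h2] at h
  have h3 : min 1 u ≤ 2 * (u / (1 + u)) := by
    rw [← mul_div_assoc, le_div_iff₀ (by linarith)]
    rcases le_total 1 u with h | h
    · rw [min_eq_left h]; linarith
    · rw [min_eq_right h]; nlinarith
  linarith

lemma det_le_trace {d : ℕ} (hd : 0 < d) (A : Matrix (Fin d) (Fin d) ℝ) (hA : A.PosDef) :
    Real.log A.det ≤ d * Real.log (A.trace / d) := by
  have hd' : (0 : ℝ) < d := by exact_mod_cast hd
  have hp : ∀ i, 0 < hA.isHermitian.eigenvalues i := hA.eigenvalues_pos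
  have h := Real.geom_mean_le_arith_mean Finset.univ (fun _ => (1 : ℝ))
    hA.isHermitian.eigenvalues (by simp) (by simpa using hd) (fun i _ => (hp i).le)
  have hdet : A.det = ∏ i, hA.isHermitian.eigenvalues i := by
    simpa using hA.isHermitian.det_eq_prod_eigenvalues
  have htr : A.trace = ∑ i, hA.isHermitian.eigenvalues i := by
    simpa using hA.isHermitian.trace_eq_sum_eigenvalues
  simp only [Real.rpow_one, one_mul, ← hdet, ← htr, Finset.sum_const, Finset.card_univ,
    Fintype.card_fin, nsmul_eq_mul, mul_one] at h
  have h2 := Real.log_le_log (Real.rpow_pos_of_pos hA.det_pos _) h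
  rw [Real.log_rpow hA.det_pos] at h2
  rwa [inv_mul_le_iff₀ hd'] at h2

theorem stmt_6 (d n : ℕ) (V₀ : Matrix (Fin d) (Fin d) ℝ) (hV₀ : V₀.PosDef)
    (x : ℕ → Fin d → ℝ) (l : ℝ) (hl : 0 < l)
    (hx : ∀ t ∈ Finset.Icc 1 n, Real.sqrt (∑ i, x t i ^ 2) ≤ l) :
    let V : ℕ → Matrix (Fin d) (Fin d) ℝ :=
      fun t => V₀ + ∑ τ ∈ Finset.Icc 1 t, Matrix.vecMulVec (x τ) (x τ)
    (∑ t ∈ Finset.Icc 1 n, min 1 (x t ⬝ᵥ ((V (t - 1))⁻¹ *ᵥ x t))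
        ≤ 2 * Real.log ((V n).det / V₀.det)) ∧
    (2 * Real.log ((V n).det / V₀.det)
        ≤ 2 * d * Real.log ((V₀.trace + n * l ^ 2) / (d * V₀.det ^ ((1 : ℝ) / d)))) := by
  intro V
  have hstep : ∀ t, V (t + 1) = V t + vecMulVec (x (t + 1)) (x (t + 1)) := by
    intro t
    simp only [V]
    rw [Finset.sum_Icc_succ_top (by omega), add_assoc]
  have hV0 : V 0 = V₀ := by simp [V]
  have hpos : ∀ t, (V t).PosDef := by
    intro t
    induction t with
    | zero => rwa [hV0]
    | succ t ih =>
      rw [hstep]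
      refine ih.add_posSemidef ?_
      simpa using posSemidef_vecMulVec_self_star (x (t + 1))
  constructor
  · clear hx
    rw [Real.log_div (hpos n).det_pos.ne' hV₀.det_pos.ne']
    induction n with
    | zero => simp [hV0]
    | succ n ih =>
      rw [Finset.sum_Icc_succ_top (by omega), hstep, det_step _ (hpos n)]
      have hu : 0 ≤ x (n + 1) ⬝ᵥ ((V n)⁻¹ *ᵥ x (n + 1)) := by
        simpa using (hpos n).inv.posSemidef.dotProduct_mulVec_nonneg (x (n + 1))
      rw [Real.log_mul (hpos n).det_pos.ne' (by linarith)]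
      have := min_le_log _ hu
      simp only [Nat.add_sub_cancel]
      linarith
  · rcases Nat.eq_zero_or_pos d with hd | hd
    · subst hd; simp
    have hd' : (0 : ℝ) < d := by exact_mod_cast hd
    have h1 := det_le_trace hd _ (hpos n)
    have : Nonempty (Fin d) := ⟨⟨0, hd⟩⟩
    have htp : 0 < (V n).trace := (hpos n).trace_pos
    have htr : (V n).trace ≤ V₀.trace + n * l ^ 2 := by
      simp only [V, trace_add, trace_sum]
      gcongr
      calc _ ≤ ∑ t ∈ Finset.Icc 1 n, l ^ 2 := by
            refine Finset.sum_le_sum fun t ht => ?_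
            have := (Real.sqrt_le_left hl.le).1 (hx t ht)
            simpa [trace_vecMulVec, dotProduct, sq] using this
        _ = n * l ^ 2 := by simp
    have h2 : Real.log ((V n).trace / d) ≤ Real.log ((V₀.trace + n * l ^ 2) / d) :=
      Real.log_le_log (by positivity) (by gcongr)
    have hD := hV₀.det_pos
    have hT : 0 < V₀.trace + n * l ^ 2 := by linarith
    rw [Real.log_div (hpos n).det_pos.ne' hD.ne', ← div_div,
      Real.log_div (by positivity) (by positivity), Real.log_rpow hD]
    have h3 : (d : ℝ) * (1 / d * Real.log V₀.det) = Real.log V₀.det := by field_simp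
    have h4 := mul_le_mul_of_nonneg_left h2 hd'.le
    rw [mul_assoc, mul_sub (d : ℝ), h3]
    linarith
end

section
/- Let l > 0, let x₁, …, x_m ∈ ℝ^d satisfy ‖x_c‖₂ ≤ l for all c, and let N₁, …, N_m ≥ 0 be real weights with Σ_c N_c ≤ t for some real t ≥ 0. Set V := l² I + Σ_{c=1}^m N_c x_c x_cᵀ. Then every eigenvalue of V is at most (t+1) l², hence det V ≤ ((t+1) l²)^d and log( det V / l^{2d} ) ≤ d log(1 + t). -/
open Matrix Finset Real

theorem aux_quad (d m : ℕ) (l : ℝ) (x : Fin m → Fin d → ℝ) (N : Fin m → ℝ) (v : Fin d → ℝ) :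
    v ⬝ᵥ ((l ^ 2 • (1 : Matrix (Fin d) (Fin d) ℝ) +
      ∑ c, N c • Matrix.vecMulVec (x c) (x c)) *ᵥ v)
      = l ^ 2 * (v ⬝ᵥ v) + ∑ c, N c * (x c ⬝ᵥ v) ^ 2 := by
  rw [Matrix.add_mulVec, dotProduct_add, Matrix.smul_mulVec, Matrix.one_mulVec, dotProduct_smul,
    Matrix.sum_mulVec, dotProduct_sum, smul_eq_mul]
  congr 1
  refine Finset.sum_congr rfl fun c _ => ?_
  rw [Matrix.smul_mulVec, dotProduct_smul, Matrix.vecMulVec_mulVec, smul_eq_mul]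
  congr 1
  simp [dotProduct_smul, dotProduct_comm v (x c), sq]

theorem aux_eig (d m : ℕ) (l t : ℝ) (hl : 0 < l)
    (x : Fin m → Fin d → ℝ) (hx : ∀ c, Real.sqrt (∑ i, x c i ^ 2) ≤ l)
    (N : Fin m → ℝ) (hN : ∀ c, 0 ≤ N c) (hNsum : ∑ c, N c ≤ t) (μ : ℝ) (v : Fin d → ℝ)
    (hv : v ≠ 0) (h : (l ^ 2 • (1 : Matrix (Fin d) (Fin d) ℝ) +
      ∑ c, N c • Matrix.vecMulVec (x c) (x c)) *ᵥ v = μ • v) :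
    l ^ 2 ≤ μ ∧ μ ≤ (t + 1) * l ^ 2 := by
  have hq := aux_quad d m l x N v
  rw [h, dotProduct_smul, smul_eq_mul] at hq
  have hpos : 0 < v ⬝ᵥ v := by
    have h0 : 0 ≤ v ⬝ᵥ v := Finset.sum_nonneg fun i _ => mul_self_nonneg _
    exact lt_of_le_of_ne h0 fun h => hv (dotProduct_self_eq_zero.mp h.symm)
  have h1 : 0 ≤ ∑ c, N c * (x c ⬝ᵥ v) ^ 2 :=
    Finset.sum_nonneg fun c _ => mul_nonneg (hN c) (sq_nonneg _)
  have h2 : ∑ c, N c * (x c ⬝ᵥ v) ^ 2 ≤ t * (l ^ 2 * (v ⬝ᵥ v)) := by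
    calc _ ≤ ∑ c, N c * (l ^ 2 * (v ⬝ᵥ v)) := by
          refine Finset.sum_le_sum fun c _ => mul_le_mul_of_nonneg_left ?_ (hN c)
          have hcs := Finset.sum_mul_sq_le_sq_mul_sq Finset.univ (x c) v
          have hxc : ∑ i, x c i ^ 2 ≤ l ^ 2 := (Real.sqrt_le_left hl.le).mp (hx c)
          have hvv : v ⬝ᵥ v = ∑ i, v i ^ 2 := by simp [dotProduct, sq]
          rw [hvv] at hpos ⊢
          exact hcs.trans (mul_le_mul_of_nonneg_right hxc hpos.le)
      _ = (∑ c, N c) * (l ^ 2 * (v ⬝ᵥ v)) := by rw [Finset.sum_mul]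
      _ ≤ _ := mul_le_mul_of_nonneg_right hNsum (by positivity)
  constructor
  · exact le_of_mul_le_mul_right (by linarith) hpos
  · exact le_of_mul_le_mul_right (by linarith) hpos

/-- With `‖x_c‖₂ ≤ l`, weights `N_c ≥ 0` summing to at most `t`, and
`V := l² I + Σ_c N_c x_c x_cᵀ`: every eigenvalue of `V` is at most `(t+1) l²`,
hence `det V ≤ ((t+1) l²)^d` and `log(det V / l^{2d}) ≤ d log(1+t)`. -/
theorem stmt_7 (d m : ℕ) (l t : ℝ) (hl : 0 < l) (ht : 0 ≤ t)
    (x : Fin m → Fin d → ℝ) (hx : ∀ c, Real.sqrt (∑ i, x c i ^ 2) ≤ l)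
    (N : Fin m → ℝ) (hN : ∀ c, 0 ≤ N c) (hNsum : ∑ c, N c ≤ t) :
    let V : Matrix (Fin d) (Fin d) ℝ :=
      l ^ 2 • (1 : Matrix (Fin d) (Fin d) ℝ) + ∑ c, N c • Matrix.vecMulVec (x c) (x c)
    (∀ (μ : ℝ) (v : Fin d → ℝ), v ≠ 0 → V *ᵥ v = μ • v → μ ≤ (t + 1) * l ^ 2) ∧
    (V.det ≤ ((t + 1) * l ^ 2) ^ d) ∧
    (Real.log (V.det / l ^ (2 * d)) ≤ d * Real.log (1 + t)) := by
  intro V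
  have key : ∀ (μ : ℝ) (v : Fin d → ℝ), v ≠ 0 → V *ᵥ v = μ • v →
      l ^ 2 ≤ μ ∧ μ ≤ (t + 1) * l ^ 2 := aux_eig d m l t hl x hx N hN hNsum
  have hV : V.IsHermitian := by
    ext i j
    simp [V, Matrix.sum_apply, Matrix.vecMulVec_apply, Matrix.one_apply, eq_comm, mul_comm]
  have hE : ∀ i, l ^ 2 ≤ hV.eigenvalues i ∧ hV.eigenvalues i ≤ (t + 1) * l ^ 2 := by
    intro i
    refine key _ _ ?_ (hV.mulVec_eigenvectorBasis i)
    intro h0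
    apply hV.eigenvectorBasis.orthonormal.ne_zero i
    ext j
    exact congrFun h0 j
  have hl2 : 0 < l ^ 2 := by positivity
  have hdet : V.det = ∏ i, hV.eigenvalues i := by
    simpa using hV.det_eq_prod_eigenvalues
  have hdpos : 0 < V.det := by
    rw [hdet]
    exact Finset.prod_pos fun i _ => hl2.trans_le (hE i).1
  have hle : V.det ≤ ((t + 1) * l ^ 2) ^ d := by
    rw [hdet]
    calc _ ≤ ∏ _i : Fin d, ((t + 1) * l ^ 2) :=
          Finset.prod_le_prod (fun i _ => (hl2.trans_le (hE i).1).le) fun i _ => (hE i).2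
      _ = _ := by simp
  refine ⟨fun μ v hv h => (key μ v hv h).2, hle, ?_⟩
  rw [← Real.log_pow]
  refine Real.log_le_log (by positivity) ?_
  rw [div_le_iff₀ (by positivity), pow_mul, ← mul_pow, add_comm 1 t]
  exact hle
end

section
/- Let β̄ ∈ ℝ^m satisfy X β̄ = x and β̄_i = 0 whenever N_ii = 0. Then xᵀ V⁻¹ x ≤ Σ_{i : N_ii > 0} β̄_i² / N_ii. In particular, if there exists m₀ > 0 with N_ii ≥ m₀ for every i with β̄_i ≠ 0, then xᵀ V⁻¹ x ≤ ‖β̄‖₁² / m₀. (Variance-decay bound: the uncertainty of the optimal representation is dominated by any feasible representation.) -/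
open Matrix Finset

/-- Variance-decay bound: if `X β̄ = x` with `β̄ᵢ = 0` whenever `Nᵢᵢ = 0`, then
`xᵀ V⁻¹ x ≤ Σ_{i : Nᵢᵢ>0} β̄ᵢ²/Nᵢᵢ`; in particular if `Nᵢᵢ ≥ m₀ > 0` for all `i` with
`β̄ᵢ ≠ 0`, then `xᵀ V⁻¹ x ≤ ‖β̄‖₁² / m₀`.  Here `V := X N Xᵀ` is positive definite and
`N` is diagonal with nonnegative entries. -/
theorem stmt_12 (d m : ℕ) (X : Matrix (Fin d) (Fin m) ℝ) (N : Fin m → ℝ)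
    (hN : ∀ i, 0 ≤ N i)
    (hV : (X * Matrix.diagonal N * Xᵀ).PosDef) (x : Fin d → ℝ)
    (βbar : Fin m → ℝ) (hfeas : X *ᵥ βbar = x) (hsupp : ∀ i, N i = 0 → βbar i = 0) :
    let V : Matrix (Fin d) (Fin d) ℝ := X * Matrix.diagonal N * Xᵀ
    (x ⬝ᵥ (V⁻¹ *ᵥ x) ≤ ∑ i ∈ Finset.univ.filter (fun i => 0 < N i), βbar i ^ 2 / N i) ∧
    (∀ m₀ : ℝ, 0 < m₀ → (∀ i, βbar i ≠ 0 → m₀ ≤ N i) →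
      x ⬝ᵥ (V⁻¹ *ᵥ x) ≤ (∑ i, |βbar i|) ^ 2 / m₀) := by
  intro V
  have hdet : IsUnit V.det := isUnit_iff_ne_zero.mpr (ne_of_gt hV.det_pos)
  have hS : ∑ i ∈ Finset.univ.filter (fun i => 0 < N i), βbar i ^ 2 / N i
      = ∑ i, βbar i ^ 2 / N i := by
    apply Finset.sum_subset (Finset.filter_subset _ _)
    intro i _ hi
    have h0 : N i = 0 := by
      simp only [Finset.mem_filter, Finset.mem_univ, true_and, not_lt] at hi
      exact le_antisymm hi (hN i)
    simp [h0]
  have key : x ⬝ᵥ (V⁻¹ *ᵥ x) ≤ ∑ i, βbar i ^ 2 / N i := by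
    obtain ⟨y, hy⟩ : ∃ y, y = V⁻¹ *ᵥ x := ⟨_, rfl⟩
    obtain ⟨u, hu⟩ : ∃ u, u = Xᵀ *ᵥ y := ⟨_, rfl⟩
    have hVy : V *ᵥ y = x := by
      rw [hy, Matrix.mulVec_mulVec, Matrix.mul_nonsing_inv V hdet, Matrix.one_mulVec]
    rw [← hy]
    have h1 : x ⬝ᵥ y = ∑ i, βbar i * u i := by
      rw [← hfeas, dotProduct_comm, Matrix.dotProduct_mulVec, ← Matrix.mulVec_transpose, ← hu,
        dotProduct_comm]
      rfl
    have h2 : x ⬝ᵥ y = ∑ i, N i * u i ^ 2 := by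
      have hx : x = X *ᵥ (Matrix.diagonal N *ᵥ u) := by
        rw [← hVy, hu, Matrix.mulVec_mulVec, Matrix.mulVec_mulVec]
      rw [dotProduct_comm, hx, Matrix.dotProduct_mulVec, ← Matrix.mulVec_transpose, ← hu]
      simp only [dotProduct, Matrix.mulVec_diagonal]
      exact Finset.sum_congr rfl fun i _ => by ring
    have h3 : ∑ i, 2 * (βbar i * u i) ≤ ∑ i, (βbar i ^ 2 / N i + N i * u i ^ 2) := by
      apply Finset.sum_le_sum
      intro i _
      rcases (hN i).eq_or_lt with h | h
      · simp [hsupp i h.symm, ← h]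
      · have e : βbar i ^ 2 / N i + N i * u i ^ 2 - 2 * (βbar i * u i)
            = (βbar i - N i * u i) ^ 2 / N i := by
          field_simp
          ring
        have : 0 ≤ (βbar i - N i * u i) ^ 2 / N i := by positivity
        linarith
    rw [Finset.sum_add_distrib, ← Finset.mul_sum, ← h1, ← h2] at h3
    linarith
  refine ⟨hS ▸ key, fun m₀ hm hb => key.trans ?_⟩
  have h4 : ∑ i, βbar i ^ 2 / N i ≤ ∑ i, |βbar i| * (∑ j, |βbar j|) / m₀ := by
    apply Finset.sum_le_sum
    intro i _
    have hi : |βbar i| ≤ ∑ j, |βbar j| :=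
      Finset.single_le_sum (f := fun j => |βbar j|) (fun j _ => abs_nonneg _) (Finset.mem_univ i)
    by_cases h : βbar i = 0
    · simp [h]
    · have h5 : βbar i ^ 2 ≤ |βbar i| * (∑ j, |βbar j|) := by
        rw [← sq_abs, sq]
        exact mul_le_mul_of_nonneg_left hi (abs_nonneg _)
      exact div_le_div₀ (le_trans (sq_nonneg _) h5) h5 hm (hb i h)
  rw [← Finset.sum_div, ← Finset.sum_mul, ← sq] at h4
  exact h4
end

section
/- Let Δ > 0, α > 0, l > 0, and let x₁, …, x_N ∈ ℝ^d satisfy ‖x_i‖₂ ≤ l for all i. Define V₀ := l² I and V_i := V_{i−1} + x_i x_iᵀ for i = 1, …, N. If Δ ≤ 2α · min( 1, √( x_iᵀ V_{i−1}⁻¹ x_i ) ) for every i = 1, …, N, then N ≤ (8 α² / Δ²) · d · log( (d + N) / d ). (Count bound for suboptimal pulls derived from the elliptical potential lemma via Cauchy–Schwarz, core of Lemma 9.) -/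
open Matrix Finset Real

lemma log_det_le_aux {d : ℕ} (A : Matrix (Fin d) (Fin d) ℝ) (hA : A.PosDef) (t : ℝ) (ht : 0 < t)
    (htr : A.trace ≤ d * t) : Real.log A.det ≤ d * Real.log t := by
  have hdet : A.det = ∏ i, hA.isHermitian.eigenvalues i := by
    simpa using hA.isHermitian.det_eq_prod_eigenvalues
  have htrace : A.trace = ∑ i, hA.isHermitian.eigenvalues i := by
    simpa using hA.isHermitian.trace_eq_sum_eigenvalues
  have hpos := hA.eigenvalues_pos
  rw [hdet, Real.log_prod (fun i _ => (hpos i).ne')]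
  have h1 : ∀ i, Real.log (hA.isHermitian.eigenvalues i)
      ≤ Real.log t + (hA.isHermitian.eigenvalues i / t - 1) := by
    intro i
    have := Real.log_le_sub_one_of_pos (div_pos (hpos i) ht)
    rw [Real.log_div (hpos i).ne' ht.ne'] at this
    linarith
  calc _ ≤ ∑ i, (Real.log t + (hA.isHermitian.eigenvalues i / t - 1)) :=
        Finset.sum_le_sum fun i _ => h1 i
    _ = d * Real.log t + (A.trace / t - d) := by
        rw [htrace, Finset.sum_add_distrib, Finset.sum_sub_distrib, Finset.sum_div]
        simp
    _ ≤ _ := by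
        have : A.trace / t ≤ d := by rwa [div_le_iff₀ ht]
        linarith

/-- Count bound for suboptimal pulls (core of Lemma 9): with `V₀ = l² I`,
`V_i = V_{i−1} + x_i x_iᵀ`, `‖x_i‖₂ ≤ l`, if `Δ ≤ 2α·min(1, √(x_iᵀ V_{i−1}⁻¹ x_i))`
for every `i = 1,…,N`, then `N ≤ (8α²/Δ²)·d·log((d+N)/d)`. -/
theorem stmt_13 (d N : ℕ) (Δ α l : ℝ) (hΔ : 0 < Δ) (hα : 0 < α) (hl : 0 < l)
    (x : ℕ → Fin d → ℝ)
    (hx : ∀ i ∈ Finset.Icc 1 N, Real.sqrt (∑ k, x i k ^ 2) ≤ l) :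
    let V : ℕ → Matrix (Fin d) (Fin d) ℝ := fun k =>
      l ^ 2 • (1 : Matrix (Fin d) (Fin d) ℝ)
        + ∑ τ ∈ Finset.Icc 1 k, Matrix.vecMulVec (x τ) (x τ)
    (∀ i ∈ Finset.Icc 1 N,
      Δ ≤ 2 * α * min 1 (Real.sqrt (x i ⬝ᵥ ((V (i - 1))⁻¹ *ᵥ x i)))) →
    (N : ℝ) ≤ 8 * α ^ 2 / Δ ^ 2 * d * Real.log ((d + N) / d) := by
  intro V h
  rcases Nat.eq_zero_or_pos N with hN | hN
  · subst hN
    rcases Nat.eq_zero_or_pos d with hd | hd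
    · subst hd; simp
    · have : (d : ℝ) ≠ 0 := by positivity
      simp [this]
  rcases Nat.eq_zero_or_pos d with hd | hd
  · subst hd
    have := h 1 (by simp; omega)
    simp at this
    linarith
  have hdR : (0 : ℝ) < d := by exact_mod_cast hd
  have hl2 : 0 < l ^ 2 := by positivity
  have hVpd : ∀ k, (V k).PosDef := by
    intro k
    refine Matrix.PosDef.add_posSemidef (Matrix.PosDef.one.smul hl2) ?_
    refine Matrix.posSemidef_sum _ fun i _ => ?_
    simpa using Matrix.posSemidef_vecMulVec_self_star (x i)
  set c : ℝ := (Δ / (2 * α)) ^ 2 with hc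
  have hc0 : 0 < c := by positivity
  have hstep : ∀ i ∈ Finset.Icc 1 N, c ≤ 1 ∧ c ≤ x i ⬝ᵥ ((V (i - 1))⁻¹ *ᵥ x i) := by
    intro i hi
    have h1 := h i hi
    have h2 : Δ / (2 * α) ≤ min 1 (Real.sqrt (x i ⬝ᵥ ((V (i - 1))⁻¹ *ᵥ x i))) := by
      rw [div_le_iff₀ (by positivity)]; linarith
    have h3 := le_min_iff.1 h2
    have hp : 0 < Δ / (2 * α) := by positivity
    refine ⟨by rw [hc]; nlinarith [h3.1], ?_⟩
    exact (Real.le_sqrt' hp).1 h3.2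
  have hc1 : c ≤ 1 := (hstep 1 (by simp; omega)).1
  have hdetstep : ∀ k, (V (k + 1)).det
      = (V k).det * (1 + x (k + 1) ⬝ᵥ ((V k)⁻¹ *ᵥ x (k + 1))) := by
    intro k
    have hV : V (k + 1) = V k + replicateCol Unit (x (k+1)) * replicateRow Unit (x (k+1)) := by
      simp only [V]
      rw [Finset.sum_Icc_succ_top (by omega), ← add_assoc, Matrix.vecMulVec_eq Unit]
    rw [hV, Matrix.det_add_replicateCol_mul_replicateRow (hVpd k).det_pos.ne'.isUnit]
    congr 1
    simp [Matrix.det_unique, Matrix.mul_apply, dotProduct, Matrix.mulVec, Finset.mul_sum, Finset.sum_mul]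
    rw [Finset.sum_comm]
    simp [mul_assoc]
  have hlow : ∀ k, k ≤ N → d * Real.log (l ^ 2) + k * (c / 2) ≤ Real.log (V k).det := by
    intro k
    induction k with
    | zero => intro _; simp [V, Matrix.det_smul]
    | succ k ih =>
      intro hk
      have ih := ih (by omega)
      have h1 := (hstep (k+1) (by simp; omega)).2
      simp only [Nat.add_sub_cancel] at h1
      rw [hdetstep, Real.log_mul (hVpd k).det_pos.ne' (by linarith)]
      have h2 : Real.log (1 + c) ≤ Real.log (1 + x (k + 1) ⬝ᵥ ((V k)⁻¹ *ᵥ x (k + 1))) :=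
        Real.log_le_log (by linarith) (by linarith)
      have h3 := Real.one_sub_inv_le_log_of_pos (show 0 < 1 + c by linarith)
      have h4 : c / 2 ≤ 1 - (1 + c)⁻¹ := by
        have : 1 - (1 + c)⁻¹ = c / (1 + c) := by field_simp; ring
        rw [this]
        exact div_le_div_of_nonneg_left hc0.le (by linarith) (by linarith)
      push_cast
      linarith
  have htr : (V N).trace ≤ d * (l ^ 2 * ((d + N) / d)) := by
    have h1 : d * (l ^ 2 * ((d + N) / d)) = d * l ^ 2 + N * l ^ 2 := by field_simp
    have h2 : (V N).trace = d * l ^ 2 + ∑ τ ∈ Finset.Icc 1 N, ∑ k, x τ k ^ 2 := by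
      simp [V, Matrix.trace_add, Matrix.trace_sum, Matrix.trace_vecMulVec, dotProduct, sq, mul_comm]
    rw [h1, h2]
    have h3 : ∑ τ ∈ Finset.Icc 1 N, ∑ k, x τ k ^ 2 ≤ ∑ τ ∈ Finset.Icc 1 N, l ^ 2 :=
      Finset.sum_le_sum fun i hi => (Real.sqrt_le_left hl.le).1 (hx i hi)
    simp at h3
    linarith
  have hup := log_det_le_aux (V N) (hVpd N) _ (by positivity) htr
  rw [Real.log_mul hl2.ne' (by positivity)] at hup
  have hfin : N * (c / 2) ≤ d * Real.log ((d + N) / d) := by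
    have := hlow N le_rfl
    linarith
  have hce : 8 * α ^ 2 / Δ ^ 2 = 2 / c := by rw [hc]; field_simp; norm_num
  rw [hce, mul_assoc, div_mul_eq_mul_div, le_div_iff₀ hc0]
  linarith
end

section
/- Let l, s ≥ 0 be reals and d ≥ 1 an integer, and let t be a real number with t ≥ 3 and t ≥ exp( 12 l² s² / (2 + d) ). Then l·s + √( (2 + d) · log( 1 + t (log t)² ) ) ≤ √( 3 (2 + d) · log t ). (Bound α_t ≤ √(3(2+d) log t) on the LinUCB-d confidence width α_t = l s + √((2+d) log f(t)) with f(t) = 1 + t log² t.) -/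
open Real

/-- Bound `α_t ≤ √(3(2+d) log t)` for the LinUCB-d confidence width
`α_t = l·s + √((2+d) log f(t))` with `f(t) = 1 + t log² t`, valid whenever `t ≥ 3`
and `t ≥ exp(12 l² s² / (2+d))`. -/
theorem stmt_15 (l s : ℝ) (hl : 0 ≤ l) (hs : 0 ≤ s) (d : ℕ) (hd : 1 ≤ d)
    (t : ℝ) (ht3 : 3 ≤ t) (ht : Real.exp (12 * l ^ 2 * s ^ 2 / (2 + d)) ≤ t) :
    l * s + Real.sqrt ((2 + d) * Real.log (1 + t * Real.log t ^ 2))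
      ≤ Real.sqrt (3 * (2 + d) * Real.log t) := by
  have htp : 0 < t := by linarith
  have hK : (0:ℝ) < 2 + d := by positivity
  set L := Real.log t with hL
  have hLp : 0 < L := Real.log_pos (by linarith)
  have hexp : Real.exp L = t := Real.exp_log htp
  have h1 : 12 * l ^ 2 * s ^ 2 / (2 + d) ≤ L := (Real.le_log_iff_exp_le htp).2 ht
  rw [div_le_iff₀ hK] at h1
  have h2 := Real.sum_le_exp_of_nonneg hLp.le 4
  rw [hexp] at h2
  norm_num [Finset.sum_range_succ, Nat.factorial] at h2
  have h3 : L ^ 2 + 1 / 3 ≤ t := by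
    nlinarith [mul_nonneg hLp.le (sq_nonneg (L - 3 / 2))]
  have h4 : 1 + t * L ^ 2 ≤ t ^ 2 := by nlinarith
  have h5 : Real.log (1 + t * L ^ 2) ≤ 2 * L := by
    have := Real.log_le_log (by positivity) h4
    rw [Real.log_pow] at this
    exact_mod_cast this
  have hM : 0 ≤ (2 + (d:ℝ)) * L / 12 := by positivity
  set M := Real.sqrt ((2 + (d:ℝ)) * L / 12) with hMdef
  have hMs : M ^ 2 = (2 + (d:ℝ)) * L / 12 := Real.sq_sqrt hM
  have hM0 : 0 ≤ M := Real.sqrt_nonneg _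
  have a1 : l * s ≤ M := Real.le_sqrt_of_sq_le (by nlinarith)
  have a2 : Real.sqrt ((2 + d) * Real.log (1 + t * L ^ 2)) ≤ 5 * M := by
    apply Real.sqrt_le_iff.2 ⟨by positivity, ?_⟩
    have := mul_le_mul_of_nonneg_left h5 hK.le
    have : 0 < (2 + (d:ℝ)) * L := by positivity
    nlinarith
  have a3 : 6 * M ≤ Real.sqrt (3 * (2 + d) * L) := Real.le_sqrt_of_sq_le (by nlinarith)
  linarith
end
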